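/- arXiv:1210.3932 — 2 statements merged into one kernel-verified Lean document; each statement's English description precedes it below -/
import Mathlib

section
/- For a càdlàg function f : [a,b] → ℝ and c > 0, there exists a càdlàg function f^c : [a,b] → ℝ such that ‖f^c − f‖_∞ ≤ c/2 and TV(f^c,[a,b]) = TV^c(f,[a,b]); consequently inf{ TV(g,[a,b]) : ‖g − f‖_∞ ≤ c/2 } = TV^c(f,[a,b]) and the infimum is attained. -/
open Set Filter

/-- A finite partition `t 0 < t 1 < ... < t n` of points in `[a, b]`. -/
def IsPart (a b : ℝ) (n : ℕ) (t : ℕ → ℝ) : Prop :=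
  a ≤ t 0 ∧ t n ≤ b ∧ ∀ i < n, t i < t (i + 1)

/-- Total variation of `f` on `[a, b]`. -/
noncomputable def TVar {E : Type*} [PseudoMetricSpace E] (f : ℝ → E) (a b : ℝ) : ENNReal :=
  ⨆ (n : ℕ) (t : ℕ → ℝ) (_ : IsPart a b n t),
    ∑ i ∈ Finset.range n, ENNReal.ofReal (dist (f (t (i + 1))) (f (t i)))

/-- Truncated variation of `f` at level `c` on `[a, b]`. -/
noncomputable def TVc {E : Type*} [PseudoMetricSpace E] (f : ℝ → E) (c a b : ℝ) : ENNReal :=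
  ⨆ (n : ℕ) (t : ℕ → ℝ) (_ : IsPart a b n t),
    ∑ i ∈ Finset.range n, ENNReal.ofReal (dist (f (t (i + 1))) (f (t i)) - c)

/-- Upward truncated variation. -/
noncomputable def UTVc (f : ℝ → ℝ) (c a b : ℝ) : ENNReal :=
  ⨆ (n : ℕ) (t : ℕ → ℝ) (_ : IsPart a b n t),
    ∑ i ∈ Finset.range n, ENNReal.ofReal (f (t (i + 1)) - f (t i) - c)

/-- Downward truncated variation. -/
noncomputable def DTVc (f : ℝ → ℝ) (c a b : ℝ) : ENNReal :=
  ⨆ (n : ℕ) (t : ℕ → ℝ) (_ : IsPart a b n t),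
    ∑ i ∈ Finset.range n, ENNReal.ofReal (f (t i) - f (t (i + 1)) - c)

/-- `f` is càdlàg on `[a, b]`: right-continuous on `[a, b)`, with left limits on `(a, b]`. -/
def Cadlag {E : Type*} [TopologicalSpace E] (f : ℝ → E) (a b : ℝ) : Prop :=
  (∀ t ∈ Set.Ico a b, Tendsto f (nhdsWithin t (Set.Ioi t)) (nhds (f t))) ∧
  (∀ t ∈ Set.Ioc a b, ∃ l, Tendsto f (nhdsWithin t (Set.Iio t)) (nhds l))

/-!
Put `T t = TV^c(f, [a, t])`. Adding one increment to a partition gives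
`|f t - f s| ≤ c + |T t - T s|`: up to the additive constant `c`, `f` is a 1-Lipschitz function
of `T`. McShane's formula `h x = inf_s (f s + c / 2 + |x - T s|)` then gives a genuinely
1-Lipschitz `h` with `|h (T t) - f t| ≤ c / 2`, and `h ∘ T` has total variation at most
`T b - T a = TV^c(f, [a, b])`. Right continuity of `f` allows `T` to be replaced by its right
limits, so that `h ∘ T` is càdlàg. If `TV^c(f, [a, b]) = ∞`, then every function within `c / 2` of
`f` has infinite variation and `f` itself is optimal.
-/

open scoped Topology NNReal

section Partition

variable {a b x : ℝ} {n : ℕ} {t : ℕ → ℝ}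

lemma IsPart.strictMonoOn (ht : IsPart a b n t) : StrictMonoOn t (Iic n) :=
  strictMonoOn_Iic_of_lt_succ ht.2.2

lemma IsPart.mem_Icc (ht : IsPart a b n t) {i : ℕ} (hi : i ≤ n) : t i ∈ Icc a b :=
  ⟨ht.1.trans (ht.strictMonoOn.monotoneOn n.zero_le hi i.zero_le),
    (ht.strictMonoOn.monotoneOn hi self_mem_Iic hi).trans ht.2.1⟩

lemma IsPart.right_mono {b' : ℝ} (ht : IsPart a b n t) (hb : b ≤ b') : IsPart a b' n t :=
  ⟨ht.1, ht.2.1.trans hb, ht.2.2⟩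

lemma isPart_zero_const (hab : a ≤ b) : IsPart a b 0 fun _ ↦ b :=
  ⟨hab, le_rfl, fun i hi ↦ absurd hi i.not_lt_zero⟩

lemma IsPart.append (ht : IsPart a b n t) (hx : t n < x) :
    IsPart a x (n + 1) (Function.update t (n + 1) x) := by
  refine ⟨by simpa using ht.1, by simp, fun i hi ↦ ?_⟩
  rcases Nat.lt_succ_iff_lt_or_eq.1 hi with hin | rfl
  · simpa [hi.ne, hin.ne] using ht.2.2 i hin
  · simpa using hx

end Partition

section TruncatedVariation

variable {E : Type*} [PseudoMetricSpace E] {f g : ℝ → E} {c a b s t : ℝ}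

/-- The truncated variation sum of `f` at level `c` along the points `t 0, ..., t n`; `TVc` is the
supremum of these sums over all partitions. -/
noncomputable def truncSum (f : ℝ → E) (c : ℝ) (n : ℕ) (t : ℕ → ℝ) : ENNReal :=
  ∑ i ∈ Finset.range n, ENNReal.ofReal (dist (f (t (i + 1))) (f (t i)) - c)

lemma truncSum_append (f : ℝ → E) (c : ℝ) (n : ℕ) (t : ℕ → ℝ) (x : ℝ) :
    truncSum f c (n + 1) (Function.update t (n + 1) x) =
      truncSum f c n t + ENNReal.ofReal (dist (f x) (f (t n)) - c) := by
  have hold : ∀ i ≤ n, Function.update t (n + 1) x i = t i := fun i hi ↦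
    Function.update_of_ne (by lia) x t
  simp only [truncSum, Finset.sum_range_succ, Function.update_self, hold n le_rfl]
  congr 1
  refine Finset.sum_congr rfl fun i hi ↦ ?_
  rw [Finset.mem_range] at hi
  rw [hold i hi.le, hold (i + 1) hi]

lemma truncSum_le_TVc {n : ℕ} {t : ℕ → ℝ} (ht : IsPart a b n t) :
    truncSum f c n t ≤ TVc f c a b :=
  le_iSup_of_le n <| le_iSup_of_le t <| le_iSup_of_le ht le_rfl

lemma TVc_le_iff {K : ENNReal} :
    TVc f c a b ≤ K ↔ ∀ n t, IsPart a b n t → truncSum f c n t ≤ K := by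
  simp only [TVc, truncSum, iSup_le_iff]

lemma TVc_mono_right (f : ℝ → E) (c a : ℝ) : Monotone (TVc f c a) := fun _ _ hst ↦
  TVc_le_iff.2 fun _ _ hu ↦ truncSum_le_TVc (hu.right_mono hst)

lemma IsPart.exists_last_eq {n : ℕ} {u : ℕ → ℝ} (hu : IsPart a b n u) (f : ℝ → E) (c : ℝ) :
    ∃ m v, IsPart a b m v ∧ v m = b ∧ truncSum f c n u ≤ truncSum f c m v := by
  rcases hu.2.1.eq_or_lt with hlast | hlast
  · exact ⟨n, u, hu, hlast, le_rfl⟩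
  · refine ⟨n + 1, Function.update u (n + 1) b, hu.append hlast, Function.update_self .., ?_⟩
    rw [truncSum_append]
    exact le_self_add

theorem TVc_add_ofReal_le (f : ℝ → E) (c : ℝ) (has : a ≤ s) (hst : s < t) :
    TVc f c a s + ENNReal.ofReal (dist (f t) (f s) - c) ≤ TVc f c a t := by
  have hsum : ∀ n u, IsPart a s n u →
      truncSum f c n u + ENNReal.ofReal (dist (f t) (f s) - c) ≤ TVc f c a t := by
    intro n u hu
    obtain ⟨m, v, hv, hvs, huv⟩ := hu.exists_last_eq f c
    calc truncSum f c n u + ENNReal.ofReal (dist (f t) (f s) - c)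
        ≤ truncSum f c m v + ENNReal.ofReal (dist (f t) (f (v m)) - c) := by
          rw [hvs]; gcongr
      _ = truncSum f c (m + 1) (Function.update v (m + 1) t) := (truncSum_append ..).symm
      _ ≤ TVc f c a t := truncSum_le_TVc (hv.append (hvs ▸ hst))
  exact add_le_of_le_tsub_right_of_le (le_add_self.trans (hsum 0 _ (isPart_zero_const has))) <|
    TVc_le_iff.2 fun n u hu ↦ ENNReal.le_sub_of_add_le_right ENNReal.ofReal_ne_top (hsum n u hu)

lemma dist_le_add_toReal_TVc_sub (has : a ≤ s) (hst : s < t) (hfin : TVc f c a t ≠ ⊤) :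
    dist (f t) (f s) ≤ c + ((TVc f c a t).toReal - (TVc f c a s).toReal) := by
  have hs : TVc f c a s ≠ ⊤ := ne_top_of_le_ne_top hfin (TVc_mono_right f c a hst.le)
  have hle := ENNReal.toReal_mono hfin (TVc_add_ofReal_le f c has hst)
  rw [ENNReal.toReal_add hs ENNReal.ofReal_ne_top, ENNReal.toReal_ofReal'] at hle
  linarith [le_max_left (dist (f t) (f s) - c) 0]

theorem TVc_le_TVar (hfg : ∀ t ∈ Icc a b, dist (g t) (f t) ≤ c / 2) :
    TVc f c a b ≤ TVar g a b := by
  refine iSup_mono fun n ↦ iSup_mono fun t ↦ iSup_mono fun ht ↦ Finset.sum_le_sum fun i hi ↦ ?_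
  rw [Finset.mem_range] at hi
  refine ENNReal.ofReal_le_ofReal ?_
  have htriangle := dist_triangle4 (f (t (i + 1))) (g (t (i + 1))) (g (t i)) (f (t i))
  rw [dist_comm (f (t (i + 1))) (g (t (i + 1)))] at htriangle
  linarith [hfg _ (ht.mem_Icc hi.le), hfg _ (ht.mem_Icc hi)]

lemma TVar_le_eVariationOn (f : ℝ → E) (a b : ℝ) : TVar f a b ≤ eVariationOn f (Icc a b) := by
  refine iSup_le fun n ↦ iSup_le fun t ↦ iSup_le fun ht ↦ ?_
  simp only [← edist_dist]
  exact eVariationOn.sum_le_of_monotoneOn_Iic ht.strictMonoOn.monotoneOn fun i ↦ ht.mem_Icc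

lemma TVar_comp_le_of_lipschitzWith {K : ℝ≥0} {h : ℝ → E} {T : ℝ → ℝ} (hh : LipschitzWith K h)
    (hT : Monotone T) (a b : ℝ) : TVar (h ∘ T) a b ≤ K * ENNReal.ofReal (T b - T a) :=
  calc TVar (h ∘ T) a b
      ≤ eVariationOn (h ∘ T) (Icc a b) := TVar_le_eVariationOn _ a b
    _ ≤ K * eVariationOn T (Icc a b) := (lipschitzOnWith_univ.2 hh).comp_eVariationOn_le
        (mapsTo_univ _ _)
    _ = K * ENNReal.ofReal (T b - T a) := by
      rw [← univ_inter (Icc a b), (hT.monotoneOn univ).eVariationOn_eq (mem_univ a) (mem_univ b)]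

end TruncatedVariation

section RightLim

open Function (rightLim)

lemma cadlag_rightLim_of_monotone {T : ℝ → ℝ} (hT : Monotone T) (a b : ℝ) :
    Cadlag (rightLim T) a b :=
  ⟨fun t _ ↦ (continuousWithinAt_rightLim_Ici (hT.tendsto_rightLim t)).mono_left
      (nhdsWithin_mono t Ioi_subset_Ici_self),
    fun t _ ↦ ⟨_, hT.rightLim.tendsto_leftLim t⟩⟩

lemma Cadlag.continuous_comp {E F : Type*} [TopologicalSpace E] [TopologicalSpace F] {f : ℝ → E}
    {h : E → F} {a b : ℝ} (hf : Cadlag f a b) (hh : Continuous h) : Cadlag (h ∘ f) a b :=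
  ⟨fun t ht ↦ (hh.tendsto _).comp (hf.1 t ht),
    fun t ht ↦ (hf.2 t ht).imp' h fun l hl ↦ (hh.tendsto l).comp hl⟩

lemma dist_le_add_rightLim_sub {E : Type*} [PseudoMetricSpace E] {f : ℝ → E} {T : ℝ → ℝ}
    {c s t : ℝ} (hT : Monotone T) (hst : s < t) (hf : Tendsto f (𝓝[>] s) (𝓝 (f s)))
    (hdist : ∀ r ∈ Ioo s t, dist (f t) (f r) ≤ c + (T t - T r)) :
    dist (f t) (f s) ≤ c + (rightLim T t - rightLim T s) := by
  have hlim : Tendsto (fun r ↦ c + (rightLim T t - T r)) (𝓝[>] s)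
      (𝓝 (c + (rightLim T t - rightLim T s))) :=
    ((hT.tendsto_rightLim s).const_sub _).const_add c
  refine le_of_tendsto_of_tendsto (tendsto_const_nhds.dist hf) hlim ?_
  filter_upwards [Ioo_mem_nhdsGT hst] with r hr
  linarith [hdist r hr, hT.le_rightLim (le_refl t)]

end RightLim

theorem exists_lipschitzWith_one_abs_comp_sub_le {ι X : Type*} [PseudoMetricSpace X] {u : ι → X}
    {f : ι → ℝ} {c : ℝ} (hf : ∀ i j, |f i - f j| ≤ c + dist (u i) (u j)) :
    ∃ h : X → ℝ, LipschitzWith 1 h ∧ ∀ i, |h (u i) - f i| ≤ c / 2 := by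
  rcases isEmpty_or_nonempty ι with hι | hι
  · exact ⟨0, LipschitzWith.const' 0, hι.elim⟩
  have hlower : ∀ x i j, f i - c / 2 - dist x (u i) ≤ f j + c / 2 + dist x (u j) := fun x i j ↦ by
    linarith [le_of_abs_le (hf i j), dist_triangle_left (u i) (u j) x]
  have hbdd : ∀ x, BddBelow (range fun j ↦ f j + c / 2 + dist x (u j)) := fun x ↦
    ⟨_, forall_mem_range.2 (hlower x hι.some)⟩
  refine ⟨fun x ↦ ⨅ j, f j + c / 2 + dist x (u j), LipschitzWith.of_le_add fun x y ↦ ?_,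
    fun i ↦ ?_⟩
  · rw [← sub_le_iff_le_add]
    refine le_ciInf fun j ↦ ?_
    linarith [ciInf_le (hbdd x) j, dist_triangle x y (u j)]
  · have hle := ciInf_le (hbdd (u i)) i
    have hge := le_ciInf (hlower (u i) i)
    rw [dist_self] at hle hge
    rw [abs_le]
    constructor <;> linarith

section Approximation

variable {E : Type*} [PseudoMetricSpace E] {a b c : ℝ}

/-- The right-continuous version of `t ↦ TV^c(f, [a, t])`, frozen at time `b` so that it is defined
and monotone on all of `ℝ`. As `TVc` is read as a real number, this is meaningful only when
`TVc f c a b ≠ ⊤`. -/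
noncomputable def rightTVc (f : ℝ → E) (c a b : ℝ) : ℝ → ℝ :=
  Function.rightLim fun t ↦ (TVc f c a (min t b)).toReal

lemma monotone_toReal_TVc_min {f : ℝ → E} (hfin : TVc f c a b ≠ ⊤) :
    Monotone fun t ↦ (TVc f c a (min t b)).toReal := fun _ _ hst ↦
  ENNReal.toReal_mono (ne_top_of_le_ne_top hfin (TVc_mono_right f c a (min_le_right _ _)))
    (TVc_mono_right f c a (min_le_min_right b hst))

lemma monotone_rightTVc {f : ℝ → E} (hfin : TVc f c a b ≠ ⊤) : Monotone (rightTVc f c a b) :=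
  (monotone_toReal_TVc_min hfin).rightLim

lemma cadlag_rightTVc {f : ℝ → E} (hfin : TVc f c a b ≠ ⊤) : Cadlag (rightTVc f c a b) a b :=
  cadlag_rightLim_of_monotone (monotone_toReal_TVc_min hfin) a b

lemma rightTVc_nonneg {f : ℝ → E} (hfin : TVc f c a b ≠ ⊤) (t : ℝ) : 0 ≤ rightTVc f c a b t :=
  ENNReal.toReal_nonneg.trans ((monotone_toReal_TVc_min hfin).le_rightLim le_rfl)

lemma rightTVc_right (f : ℝ → E) (c a b : ℝ) : rightTVc f c a b b = (TVc f c a b).toReal := by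
  refine rightLim_eq_of_tendsto (tendsto_const_nhds.congr' ?_)
  filter_upwards [self_mem_nhdsWithin] with t ht
  rw [min_eq_right (mem_Ioi.1 ht).le]

lemma dist_le_add_rightTVc_sub {f : ℝ → E} (hf : ∀ t ∈ Ico a b, Tendsto f (𝓝[>] t) (𝓝 (f t)))
    (hfin : TVc f c a b ≠ ⊤) {s t : ℝ} (has : a ≤ s) (hst : s < t) (htb : t ≤ b) :
    dist (f t) (f s) ≤ c + (rightTVc f c a b t - rightTVc f c a b s) := by
  refine dist_le_add_rightLim_sub (monotone_toReal_TVc_min hfin) hst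
    (hf s ⟨has, hst.trans_le htb⟩) fun r hr ↦ ?_
  rw [min_eq_left htb, min_eq_left (hr.2.le.trans htb)]
  exact dist_le_add_toReal_TVc_sub (has.trans hr.1.le) hr.2
    (ne_top_of_le_ne_top hfin (TVc_mono_right f c a htb))

lemma dist_le_add_dist_rightTVc {f : ℝ → E} (hc : 0 ≤ c)
    (hf : ∀ t ∈ Ico a b, Tendsto f (𝓝[>] t) (𝓝 (f t))) (hfin : TVc f c a b ≠ ⊤) {s t : ℝ}
    (hs : s ∈ Icc a b) (ht : t ∈ Icc a b) :
    dist (f s) (f t) ≤ c + dist (rightTVc f c a b s) (rightTVc f c a b t) := by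
  wlog hst : s ≤ t generalizing s t
  · rw [dist_comm (f s), dist_comm (rightTVc f c a b s)]
    exact this ht hs (le_of_not_ge hst)
  rcases hst.eq_or_lt with rfl | hst
  · simpa using hc
  · rw [dist_comm (f s), dist_comm (rightTVc f c a b s), Real.dist_eq]
    linarith [dist_le_add_rightTVc_sub hf hfin hs.1 hst ht.2,
      le_abs_self (rightTVc f c a b t - rightTVc f c a b s)]

theorem exists_cadlag_TVar_le_TVc {f : ℝ → ℝ} (hc : 0 ≤ c)
    (hf : ∀ t ∈ Ico a b, Tendsto f (𝓝[>] t) (𝓝 (f t))) (hfin : TVc f c a b ≠ ⊤) :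
    ∃ g : ℝ → ℝ, Cadlag g a b ∧ (∀ t ∈ Icc a b, |g t - f t| ≤ c / 2) ∧
      TVar g a b ≤ TVc f c a b := by
  obtain ⟨h, hh, hclose⟩ := exists_lipschitzWith_one_abs_comp_sub_le (ι := Icc a b)
    (u := fun t ↦ rightTVc f c a b t) fun s t ↦ dist_le_add_dist_rightTVc hc hf hfin s.2 t.2
  refine ⟨h ∘ rightTVc f c a b, (cadlag_rightTVc hfin).continuous_comp hh.continuous,
    fun t ht ↦ hclose ⟨t, ht⟩, ?_⟩
  calc TVar (h ∘ rightTVc f c a b) a b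
      ≤ ENNReal.ofReal (rightTVc f c a b b - rightTVc f c a b a) := by
        simpa using TVar_comp_le_of_lipschitzWith hh (monotone_rightTVc hfin) a b
    _ ≤ ENNReal.ofReal (rightTVc f c a b b) :=
        ENNReal.ofReal_le_ofReal (sub_le_self _ (rightTVc_nonneg hfin a))
    _ = TVc f c a b := by rw [rightTVc_right, ENNReal.ofReal_toReal hfin]

end Approximation

/-- There is a càdlàg function `fc` within uniform distance `c/2` of `f`
whose total variation equals `TV^c(f,[a,b])`; it attains the infimum of total variations
over the ball of radius `c/2` around `f`. -/
theorem exists_optimal_approx (a b : ℝ) (hab : a < b) (f : ℝ → ℝ)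
    (hf : Cadlag f a b) (c : ℝ) (hc : 0 < c) :
    ∃ fc : ℝ → ℝ, Cadlag fc a b ∧
      (∀ t ∈ Set.Icc a b, |fc t - f t| ≤ c / 2) ∧
      TVar fc a b = TVc f c a b ∧
      (∀ g : ℝ → ℝ, (∀ t ∈ Set.Icc a b, |g t - f t| ≤ c / 2) →
        TVc f c a b ≤ TVar g a b) := by
  by_cases hfin : TVc f c a b = ⊤
  · have hself : ∀ t ∈ Icc a b, |f t - f t| ≤ c / 2 := fun t _ ↦ by simpa using (half_pos hc).le
    refine ⟨f, hf, hself, (top_le_iff.1 ?_).trans hfin.symm, fun g hg ↦ TVc_le_TVar hg⟩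
    exact hfin ▸ TVc_le_TVar hself
  · obtain ⟨g, hgcadlag, hclose, hle⟩ := exists_cadlag_TVar_le_TVc hc.le hf.1 hfin
    exact ⟨g, hgcadlag, hclose, hle.antisymm (TVc_le_TVar hclose), fun g hg ↦ TVc_le_TVar hg⟩
end

section
/- For any f : [a,b] → ℝ^N càdlàg with the L¹ metric ρ(x,y) = Σ_{i=1}^N |x_i − y_i|, and any c > 0, inf{ TV(g,[a,b]) : sup_t ρ(f(t),g(t)) ≤ c/2 } ≤ inf{ Σ_{i=1}^N TV^{c_i}(f_i,[a,b]) : c_1,...,c_N > 0, c_1 + ... + c_N = c }, where f = (f_1,...,f_N). -/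
open Set Filter

/-- The `L¹` distance on `Fin N → ℝ`. -/
noncomputable def distL1 {N : ℕ} (x y : Fin N → ℝ) : ℝ := ∑ i, |x i - y i|

/-- Total variation with respect to the `L¹` metric. -/
noncomputable def TVarL1 {N : ℕ} (g : ℝ → (Fin N → ℝ)) (a b : ℝ) : ENNReal :=
  ⨆ (n : ℕ) (t : ℕ → ℝ) (_ : IsPart a b n t),
    ∑ i ∈ Finset.range n, ENNReal.ofReal (distL1 (g (t (i + 1))) (g (t i)))

/-!
Let `T t` be the truncated variation of a real function `f` on `[a, t]` at level `c`. It is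
nonnegative, nondecreasing and satisfies `|f y - f x| ≤ c + (T y - T x)` for `x ≤ y`, and nothing
else about it matters. The running suprema `U` of `T + f` and `L` of `T - f` stay in
`[T + f, T + f + c]` and `[T - f, T - f + c]`, so `g = (U - L) / 2` is within `c / 2` of `f`, and,
`U` and `L` being nondecreasing, the variation of `g` is at most the increase of `(U + L) / 2`.
Since `U + L ≤ 2 * T + c`, this increase is at most `T` provided that `U + L` is at least `c` from
the start. Hence the suprema are started at values `z` and `c - z`; such a `z` has to separate
`f - T` from `f + T + c`.
-/

section RunningSup

variable {α β : Type*} [Preorder α] [ConditionallyCompleteLattice β]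
  {φ : α → β} {s : Set α} {z C : β} {x y : α}

/-- The running supremum of `φ` along `s`, started at `z`: the supremum of `z` and of all values
`φ y` with `y ∈ s` and `y ≤ x`. It is a junk value if `φ` is unbounded on `s ∩ Iic x`. -/
noncomputable def runningSup (φ : α → β) (s : Set α) (z : β) (x : α) : β :=
  sSup (insert z (φ '' (s ∩ Iic x)))

theorem init_le_runningSup (hφ : BddAbove (φ '' (s ∩ Iic x))) : z ≤ runningSup φ s z x :=
  le_csSup (hφ.insert z) (mem_insert _ _)

theorem le_runningSup (hφ : BddAbove (φ '' (s ∩ Iic x))) (hx : x ∈ s) :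
    φ x ≤ runningSup φ s z x :=
  le_csSup (hφ.insert z) (mem_insert_of_mem _ (mem_image_of_mem φ ⟨hx, le_rfl⟩))

theorem runningSup_le (hz : z ≤ C) (hφ : ∀ y ∈ s, y ≤ x → φ y ≤ C) : runningSup φ s z x ≤ C :=
  csSup_le (insert_nonempty _ _) <| forall_mem_insert.2
    ⟨hz, forall_mem_image.2 fun y hy => hφ y hy.1 hy.2⟩

theorem runningSup_mono (hφ : BddAbove (φ '' (s ∩ Iic y))) (hxy : x ≤ y) :
    runningSup φ s z x ≤ runningSup φ s z y :=
  csSup_le_csSup (hφ.insert z) (insert_nonempty _ _) <|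
    insert_subset_insert <| image_mono <| inter_subset_inter_right s <| Iic_subset_Iic.2 hxy

theorem runningSup_add_runningSup_le [AddCommGroup β] [IsOrderedAddMonoid β] {ψ : α → β} {w : β}
    (hzw : z + w ≤ C)
    (hψ : ∀ y ∈ s, y ≤ x → z + ψ y ≤ C) (hφ : ∀ y ∈ s, y ≤ x → φ y + w ≤ C)
    (hφψ : ∀ y ∈ s, y ≤ x → ∀ y' ∈ s, y' ≤ x → φ y + ψ y' ≤ C) :
    runningSup φ s z x + runningSup ψ s w x ≤ C := by
  have hψ_le : ∀ r, r + w ≤ C → (∀ y ∈ s, y ≤ x → r + ψ y ≤ C) → r + runningSup ψ s w x ≤ C :=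
    fun r hw hr => le_sub_iff_add_le'.1 <|
      runningSup_le (le_sub_iff_add_le'.2 hw) fun y hy hyx => le_sub_iff_add_le'.2 (hr y hy hyx)
  exact le_sub_iff_add_le.1 <| runningSup_le (le_sub_iff_add_le.2 (hψ_le z hzw hψ))
    fun y hy hyx => le_sub_iff_add_le.2 (hψ_le (φ y) (hφ y hy hyx) (hφψ y hy hyx))

end RunningSup

/-- `T` controls the variation of `f` on `s` beyond the level `c`: the increments of the
nondecreasing function `T ≥ 0` dominate those of `f` truncated at `c`. The model case is the
truncated variation of `f` up to a variable time. -/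
structure IsVariationControl {α E : Type*} [Preorder α] [PseudoMetricSpace E]
    (f : α → E) (T : α → ℝ) (c : ℝ) (s : Set α) : Prop where
  nonneg : ∀ x ∈ s, 0 ≤ T x
  monotoneOn : MonotoneOn T s
  dist_le : ∀ x ∈ s, ∀ y ∈ s, x ≤ y → dist (f y) (f x) ≤ c + (T y - T x)

namespace IsVariationControl

section Real

variable {α : Type*} {f T : α → ℝ} {c z : ℝ} {s : Set α} {x y : α}

section Preorder

variable [Preorder α]

theorem sub_le_of_le (h : IsVariationControl f T c s) (hx : x ∈ s) (hy : y ∈ s) (hxy : x ≤ y) :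
    f y - f x ≤ c + (T y - T x) :=
  (le_abs_self _).trans (h.dist_le x hx y hy hxy)

theorem sub_le_of_ge (h : IsVariationControl f T c s) (hx : x ∈ s) (hy : y ∈ s) (hyx : y ≤ x) :
    f y - f x ≤ c + (T x - T y) :=
  (le_abs_self _).trans ((dist_comm (f y) (f x)).trans_le (h.dist_le y hy x hx hyx))

theorem neg (h : IsVariationControl f T c s) : IsVariationControl (-f) T c s :=
  ⟨h.nonneg, h.monotoneOn, fun x hx y hy hxy => by
    simpa only [Pi.neg_apply, dist_neg_neg] using h.dist_le x hx y hy hxy⟩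

theorem add_le_add_add (h : IsVariationControl f T c s) (hx : x ∈ s) (hy : y ∈ s) (hxy : x ≤ y) :
    (T + f) x ≤ (T + f) y + c := by
  simp only [Pi.add_apply]
  linarith [h.sub_le_of_ge hy hx hxy]

theorem bddAbove_image_add (h : IsVariationControl f T c s) (hx : x ∈ s) :
    BddAbove ((T + f) '' (s ∩ Iic x)) :=
  ⟨(T + f) x + c, forall_mem_image.2 fun _ hy => h.add_le_add_add hy.1 hx hy.2⟩

theorem monotoneOn_runningSup (h : IsVariationControl f T c s) :
    MonotoneOn (runningSup (T + f) s z) s :=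
  fun _ _ _ hy hxy => runningSup_mono (h.bddAbove_image_add hy) hxy

theorem runningSup_mem_Icc (h : IsVariationControl f T c s) (hx : x ∈ s)
    (hz : z ≤ (T + f) x + c) :
    runningSup (T + f) s z x ∈ Icc ((T + f) x) ((T + f) x + c) :=
  ⟨le_runningSup (h.bddAbove_image_add hx) hx,
    runningSup_le hz fun _ hy hyx => h.add_le_add_add hy hx hyx⟩

theorem of_monotoneOn {U L : α → ℝ} (hU : MonotoneOn U s) (hL : MonotoneOn L s)
    (hUL : ∀ x ∈ s, c ≤ U x + L x) :
    IsVariationControl (fun x => (U x - L x) / 2) (fun x => (U x + L x - c) / 2) 0 s where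
  nonneg x hx := by linarith [hUL x hx]
  monotoneOn x hx y hy hxy := by linarith [hU hx hy hxy, hL hx hy hxy]
  dist_le x hx y hy hxy := by
    rw [Real.dist_eq, abs_le]
    constructor <;> linarith [hU hx hy hxy, hL hx hy hxy]

end Preorder

variable [LinearOrder α]

theorem exists_separator (h : IsVariationControl f T c s) :
    ∃ z, ∀ x ∈ s, f x - T x ≤ z ∧ z ≤ T x + f x + c := by
  obtain rfl | hs := s.eq_empty_or_nonempty
  · simp
  have hle : ∀ x ∈ s, ∀ y ∈ s, f x - T x ≤ T y + f y + c := by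
    intro x hx y hy
    have hTx := h.nonneg x hx
    have hTy := h.nonneg y hy
    obtain hxy | hyx := le_total x y
    · linarith [h.sub_le_of_ge hy hx hxy]
    · linarith [h.sub_le_of_le hy hx hyx]
  obtain ⟨z, hz, hz'⟩ := exists_between_of_forall_le (hs.image fun x => f x - T x)
    (hs.image fun y => T y + f y + c) (forall_mem_image.2 fun x hx =>
      forall_mem_image.2 fun y hy => hle x hx y hy)
  exact ⟨z, fun x hx => ⟨hz (mem_image_of_mem _ hx), hz' (mem_image_of_mem _ hx)⟩⟩

theorem add_add_add_neg_le (h : IsVariationControl f T c s) {t : α} (ht : t ∈ s)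
    (hx : x ∈ s) (hxt : x ≤ t) (hy : y ∈ s) (hyt : y ≤ t) :
    (T + f) x + (T + -f) y ≤ 2 * T t + c := by
  simp only [Pi.add_apply, Pi.neg_apply]
  have hTx := h.monotoneOn hx ht hxt
  have hTy := h.monotoneOn hy ht hyt
  obtain hxy | hyx := le_total x y
  · linarith [h.sub_le_of_ge hy hx hxy]
  · linarith [h.sub_le_of_le hy hx hyx]

theorem runningSup_add_runningSup_neg_le (h : IsVariationControl f T c s)
    (hz : ∀ x ∈ s, f x - T x ≤ z ∧ z ≤ T x + f x + c) {t : α} (ht : t ∈ s) :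
    runningSup (T + f) s z t + runningSup (T + -f) s (c - z) t ≤ 2 * T t + c := by
  have hT : ∀ x ∈ s, x ≤ t → T x ≤ T t := fun x hx hxt => h.monotoneOn hx ht hxt
  apply runningSup_add_runningSup_le
  · linarith [h.nonneg t ht]
  · intro y hy hyt
    simp only [Pi.add_apply, Pi.neg_apply]
    linarith [hz y hy, hT y hy hyt]
  · intro x hx hxt
    simp only [Pi.add_apply]
    linarith [hz x hx, hT x hx hxt]
  · intro x hx hxt y hy hyt
    exact h.add_add_add_neg_le ht hx hxt hy hyt

theorem exists_abs_sub_le (h : IsVariationControl f T c s) :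
    ∃ g S : α → ℝ, (∀ x ∈ s, |f x - g x| ≤ c / 2) ∧ IsVariationControl g S 0 s ∧
      ∀ x ∈ s, S x ≤ T x := by
  obtain ⟨z, hz⟩ := h.exists_separator
  let U := runningSup (T + f) s z
  let L := runningSup (T + -f) s (c - z)
  have hU : ∀ x ∈ s, U x ∈ Icc ((T + f) x) ((T + f) x + c) := fun x hx =>
    h.runningSup_mem_Icc hx (hz x hx).2
  have hL : ∀ x ∈ s, L x ∈ Icc ((T + -f) x) ((T + -f) x + c) := fun x hx =>
    h.neg.runningSup_mem_Icc hx (by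
      simp only [Pi.add_apply, Pi.neg_apply]
      linarith [hz x hx])
  have hUL : ∀ x ∈ s, c ≤ U x + L x := fun x hx => by
    have hzU : z ≤ U x := init_le_runningSup (h.bddAbove_image_add hx)
    have hzL : c - z ≤ L x := init_le_runningSup (h.neg.bddAbove_image_add hx)
    linarith
  refine ⟨fun x => (U x - L x) / 2, fun x => (U x + L x - c) / 2, fun x hx => ?_,
    of_monotoneOn h.monotoneOn_runningSup h.neg.monotoneOn_runningSup hUL, fun x hx => ?_⟩
  · obtain ⟨hU₁, hU₂⟩ := hU x hx
    obtain ⟨hL₁, hL₂⟩ := hL x hx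
    simp only [Pi.add_apply, Pi.neg_apply] at hU₁ hU₂ hL₁ hL₂
    rw [abs_le]
    constructor <;> linarith
  · have : U x + L x ≤ 2 * T x + c := h.runningSup_add_runningSup_neg_le hz hx
    linarith

end Real

end IsVariationControl

namespace IsPart

variable {a b b' : ℝ} {n : ℕ} {t : ℕ → ℝ}

theorem mem_Icc_s16 (h : IsPart a b n t) {i : ℕ} (hi : i ≤ n) : t i ∈ Icc a b := by
  have ht : StrictMonoOn t (Iic n) := strictMonoOn_Iic_of_lt_succ h.2.2
  exact ⟨h.1.trans (ht.monotoneOn (mem_Iic.2 n.zero_le) (mem_Iic.2 hi) i.zero_le),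
    (ht.monotoneOn (mem_Iic.2 hi) self_mem_Iic hi).trans h.2.1⟩

theorem const {x : ℝ} (hx : x ∈ Icc a b) : IsPart a b 0 fun _ => x :=
  ⟨hx.1, hx.2, fun _ hi => absurd hi (Nat.not_lt_zero _)⟩

theorem mono_right (h : IsPart a b n t) (hb : b ≤ b') : IsPart a b' n t :=
  ⟨h.1, h.2.1.trans hb, h.2.2⟩

theorem update (h : IsPart a b n t) (ht : t n < b') :
    IsPart a b' (n + 1) (Function.update t (n + 1) b') := by
  refine ⟨by simpa using h.1, by simp, fun i hi => ?_⟩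
  obtain hin | rfl := Nat.lt_succ_iff_lt_or_eq.1 hi
  · rw [Function.update_of_ne (by lia), Function.update_of_ne (by lia)]
    exact h.2.2 i hin
  · simpa using ht

end IsPart

theorem sum_range_update {α M : Type*} [AddCommMonoid M] (u : ℕ → α) (n : ℕ) (t : α)
    (F : α → α → M) :
    ∑ i ∈ Finset.range (n + 1),
        F (Function.update u (n + 1) t (i + 1)) (Function.update u (n + 1) t i) =
      ∑ i ∈ Finset.range n, F (u (i + 1)) (u i) + F t (u n) := by
  rw [Finset.sum_range_succ]
  congr 1
  · refine Finset.sum_congr rfl fun i hi => ?_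
    have hin := Finset.mem_range.1 hi
    rw [Function.update_of_ne (by lia), Function.update_of_ne (by lia)]
  · simp

section TruncatedVariation

variable {E : Type*} [PseudoMetricSpace E] {f : ℝ → E} {c a b s t : ℝ} {n : ℕ} {u : ℕ → ℝ}

theorem sum_le_tvc (h : IsPart a b n u) :
    ∑ i ∈ Finset.range n, ENNReal.ofReal (dist (f (u (i + 1))) (f (u i)) - c) ≤ TVc f c a b :=
  le_iSup₂_of_le n u <| le_iSup_of_le h le_rfl

theorem sum_add_ofReal_dist_last_le_tvc (h : IsPart a s n u) (hut : u n < t) :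
    ∑ i ∈ Finset.range n, ENNReal.ofReal (dist (f (u (i + 1))) (f (u i)) - c) +
      ENNReal.ofReal (dist (f t) (f (u n)) - c) ≤ TVc f c a t :=
  (sum_range_update u n t fun x y => ENNReal.ofReal (dist (f x) (f y) - c)).symm.trans_le
    (sum_le_tvc (h.update hut))

theorem tvc_mono_right (hst : s ≤ t) : TVc f c a s ≤ TVc f c a t :=
  iSup₂_le fun _ _ => iSup_le fun h => sum_le_tvc (h.mono_right hst)

theorem sum_add_ofReal_dist_endpoint_le_tvc (h : IsPart a s n u) (hst : s < t) :
    ∑ i ∈ Finset.range n, ENNReal.ofReal (dist (f (u (i + 1))) (f (u i)) - c) +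
      ENNReal.ofReal (dist (f t) (f s) - c) ≤ TVc f c a t := by
  obtain hus | hus := h.2.1.eq_or_lt
  · simpa only [hus] using sum_add_ofReal_dist_last_le_tvc h (hus.trans_lt hst)
  · have hs : Function.update u (n + 1) s (n + 1) = s := Function.update_self ..
    have := sum_add_ofReal_dist_last_le_tvc (f := f) (c := c) (h.update hus) (hs.trans_lt hst)
    rw [sum_range_update u n s fun x y => ENNReal.ofReal (dist (f x) (f y) - c), hs] at this
    exact (add_le_add_left le_self_add _).trans this

theorem tvc_add_ofReal_dist_sub_le_tvc (hc : 0 ≤ c) (has : a ≤ s) (hst : s ≤ t) :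
    TVc f c a s + ENNReal.ofReal (dist (f t) (f s) - c) ≤ TVc f c a t := by
  obtain rfl | hst := hst.eq_or_lt
  · simp [ENNReal.ofReal_of_nonpos (neg_nonpos.2 hc)]
  · have hle : ENNReal.ofReal (dist (f t) (f s) - c) ≤ TVc f c a t := by
      simpa using sum_add_ofReal_dist_endpoint_le_tvc (f := f) (c := c) (.const ⟨has, le_rfl⟩) hst
    refine (ENNReal.le_sub_iff_add_le_right ENNReal.ofReal_ne_top hle).1 ?_
    exact iSup₂_le fun _ _ => iSup_le fun h =>
      ENNReal.le_sub_of_add_le_right ENNReal.ofReal_ne_top <|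
        sum_add_ofReal_dist_endpoint_le_tvc h hst

theorem isVariationControl_toReal_tvc (hc : 0 ≤ c) (hf : TVc f c a b ≠ ⊤) :
    IsVariationControl f (fun x => (TVc f c a x).toReal) c (Icc a b) := by
  have hfin : ∀ x ∈ Icc a b, TVc f c a x ≠ ⊤ := fun x hx =>
    ne_top_of_le_ne_top hf (tvc_mono_right hx.2)
  refine ⟨fun _ _ => ENNReal.toReal_nonneg, fun _ _ y hy hxy =>
    ENNReal.toReal_mono (hfin y hy) (tvc_mono_right hxy), fun x hx y hy hxy => ?_⟩
  have hxy' := ENNReal.toReal_mono (hfin y hy) (tvc_add_ofReal_dist_sub_le_tvc (f := f) hc hx.1 hxy)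
  rw [ENNReal.toReal_add (hfin x hx) ENNReal.ofReal_ne_top, ENNReal.toReal_ofReal'] at hxy'
  linarith [le_max_left (dist (f y) (f x) - c) 0]

theorem IsVariationControl.tvar_le {S : ℝ → ℝ} {C : ℝ} (h : IsVariationControl f S 0 (Icc a b))
    (hC : ∀ x ∈ Icc a b, S x ≤ C) : TVar f a b ≤ ENNReal.ofReal C := by
  refine iSup₂_le fun n u => iSup_le fun hu => ?_
  rw [← ENNReal.ofReal_sum_of_nonneg fun _ _ => dist_nonneg]
  apply ENNReal.ofReal_le_ofReal
  calc ∑ i ∈ Finset.range n, dist (f (u (i + 1))) (f (u i))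
      ≤ ∑ i ∈ Finset.range n, (S (u (i + 1)) - S (u i)) := by
        refine Finset.sum_le_sum fun i hi => ?_
        have hin := Finset.mem_range.1 hi
        simpa using h.dist_le _ (hu.mem_Icc_s16 hin.le) _ (hu.mem_Icc_s16 hin) (hu.2.2 i hin).le
    _ = S (u n) - S (u 0) := Finset.sum_range_sub (fun i => S (u i)) n
    _ ≤ S (u n) := sub_le_self _ (h.nonneg _ (hu.mem_Icc_s16 (Nat.zero_le n)))
    _ ≤ C := hC _ (hu.mem_Icc_s16 le_rfl)

end TruncatedVariation

theorem exists_abs_sub_le_and_tvar_le_tvc (f : ℝ → ℝ) {c : ℝ} (hc : 0 ≤ c) (a b : ℝ) :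
    ∃ g : ℝ → ℝ, (∀ t ∈ Icc a b, |f t - g t| ≤ c / 2) ∧ TVar g a b ≤ TVc f c a b := by
  by_cases hf : TVc f c a b = ⊤
  · exact ⟨f, fun t _ => by simpa using div_nonneg hc zero_le_two, hf ▸ le_top⟩
  · obtain ⟨g, S, hfg, hS, hST⟩ := (isVariationControl_toReal_tvc hc hf).exists_abs_sub_le
    have hSV : ∀ x ∈ Icc a b, S x ≤ (TVc f c a b).toReal := fun x hx =>
      (hST x hx).trans (ENNReal.toReal_mono hf (tvc_mono_right hx.2))
    exact ⟨g, hfg, (hS.tvar_le hSV).trans ENNReal.ofReal_toReal_le⟩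

theorem tvarL1_le_sum_tvar {N : ℕ} (g : ℝ → Fin N → ℝ) (a b : ℝ) :
    TVarL1 g a b ≤ ∑ i, TVar (fun t => g t i) a b := by
  refine iSup₂_le fun n t => iSup_le fun ht => ?_
  simp_rw [distL1, ENNReal.ofReal_sum_of_nonneg fun _ _ => abs_nonneg _]
  rw [Finset.sum_comm]
  exact Finset.sum_le_sum fun i _ => le_iSup₂_of_le n t <| le_iSup_of_le ht le_rfl

theorem tv_l1_upper_bound_general {N : ℕ} (a b : ℝ) (f : ℝ → (Fin N → ℝ)) (c : ℝ) :
    (⨅ (g : ℝ → (Fin N → ℝ))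
        (_ : ∀ t ∈ Set.Icc a b, distL1 (f t) (g t) ≤ c / 2), TVarL1 g a b)
      ≤ ⨅ (cs : Fin N → ℝ) (_ : ∀ i, 0 ≤ cs i) (_ : ∑ i, cs i = c),
          ∑ i, TVc (fun t => f t i) (cs i) a b := by
  refine le_iInf₂ fun cs hcs => le_iInf fun hsum => ?_
  choose g hfg hg using fun i => exists_abs_sub_le_and_tvar_le_tvc (fun t => f t i) (hcs i) a b
  refine iInf₂_le_of_le (fun t i => g i t) (fun t ht => ?_) ?_
  · calc distL1 (f t) (fun i => g i t) ≤ ∑ i, cs i / 2 :=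
          Finset.sum_le_sum fun i _ => hfg i t ht
      _ = c / 2 := by rw [← Finset.sum_div, hsum]
  · exact (tvarL1_le_sum_tvar _ a b).trans (Finset.sum_le_sum fun i _ => hg i)

/-- For `f : [a,b] → ℝ^N` càdlàg with the `L¹` metric, the infimum of total
variations over the uniform `c/2`-ball around `f` is at most the infimum over splittings
`c = c_1 + ... + c_N` of the sums of coordinatewise truncated variations. -/
theorem tv_l1_upper_bound {N : ℕ} (a b : ℝ) (hab : a < b)
    (f : ℝ → (Fin N → ℝ)) (hf : Cadlag f a b) (c : ℝ) (hc : 0 < c) :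
    (⨅ (g : ℝ → (Fin N → ℝ))
        (_ : ∀ t ∈ Set.Icc a b, distL1 (f t) (g t) ≤ c / 2), TVarL1 g a b)
      ≤ ⨅ (cs : Fin N → ℝ) (_ : ∀ i, 0 < cs i) (_ : ∑ i, cs i = c),
          ∑ i, TVc (fun t => f t i) (cs i) a b :=
  (tv_l1_upper_bound_general a b f c).trans <|
    iInf_mono fun _ => iInf_mono' fun hcs => ⟨fun i => (hcs i).le, le_rfl⟩
end
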